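/- arXiv:2009.07305 — 3 statements merged into one kernel-verified Lean document; each statement's English description precedes it below -/
import Mathlib

section
/- If T and T* are finite trees, each with at least 3 vertices, then the general position number of their Cartesian product satisfies gp(T □ T*) = gp(T) + gp(T*). -/
open SimpleGraph

/-- A set `S` of vertices of `G` is a general position set if for every three
pairwise-distinct vertices `x, y, z ∈ S` one has `d(x,y) ≠ d(x,z) + d(z,y)`. -/
def IsGenPosSet {V : Type*} (G : SimpleGraph V) (S : Set V) : Prop :=
  ∀ x ∈ S, ∀ y ∈ S, ∀ z ∈ S, x ≠ y → x ≠ z → y ≠ z →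
    G.dist x y ≠ G.dist x z + G.dist z y

/-- The general position number of a graph on a finite vertex type: the
cardinality of a largest general position set. -/
noncomputable def genPosNum {V : Type*} [Fintype V] (G : SimpleGraph V) : ℕ :=
  sSup {n | ∃ S : Finset V, IsGenPosSet G ↑S ∧ S.card = n}

/-- A vertex is a leaf if it has exactly one neighbour (degree 1). -/
def IsLeaf {V : Type*} (G : SimpleGraph V) (v : V) : Prop :=
  ∃! w, G.Adj v w

namespace SimpleGraph

variable {V W : Type*} {G : SimpleGraph V} {H : SimpleGraph W}

theorem dist_eq_add_symm {x y z : V} (h : G.dist x y = G.dist x z + G.dist z y) :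
    G.dist y x = G.dist y z + G.dist z x := by
  rw [dist_comm, h, Nat.add_comm, G.dist_comm (u := z) (v := y), G.dist_comm (u := x) (v := z)]

/-- In a tree, the geodesic interval between `x` and `y` is covered by the intervals between
`x` and `w` and between `w` and `y`. -/
theorem IsTree.dist_eq_add_or_dist_eq_add (hG : G.IsTree) {x y z : V} (w : V)
    (h : G.dist x y = G.dist x z + G.dist z y) :
    G.dist x w = G.dist x z + G.dist z w ∨ G.dist w y = G.dist w z + G.dist z y := by
  classical
  obtain ⟨p, hp⟩ := hG.1.exists_walk_length_eq_dist x z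
  obtain ⟨q, hq⟩ := hG.1.exists_walk_length_eq_dist z y
  obtain ⟨r, hr⟩ := hG.1.exists_walk_length_eq_dist x w
  obtain ⟨s, hs⟩ := hG.1.exists_walk_length_eq_dist w y
  have hpq : (p.append q).IsPath := Walk.isPath_of_length_eq_dist _ (by simp [h, hp, hq])
  have heq : p.append q = (r.append s).bypass :=
    congrArg Subtype.val ((hG.2.subsingleton_path x y).elim ⟨_, hpq⟩
      ⟨_, (r.append s).bypass_isPath⟩)
  have hz : z ∈ (r.append s).support := by
    apply (r.append s).support_bypass_subset_support
    rw [← heq]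
    simp
  have split {a b : V} (t : G.Walk a b) (ht : t.length = G.dist a b) (hzt : z ∈ t.support) :
      G.dist a b = G.dist a z + G.dist z b := by
    have hlen := congrArg Walk.length (t.take_spec hzt)
    rw [Walk.length_append] at hlen
    have := dist_le (t.takeUntil z hzt)
    have := dist_le (t.dropUntil z hzt)
    have := hG.1.dist_triangle (u := a) (v := z) (w := b)
    lia
  rw [Walk.mem_support_append_iff] at hz
  exact hz.imp (split r hr) (split s hs)

theorem Connected.exists_dist_eq_add (hG : G.Connected) {x y : V} (hne : x ≠ y)
    (hadj : ¬ G.Adj x y) :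
    ∃ u, u ≠ x ∧ u ≠ y ∧ G.dist x y = G.dist x u + G.dist u y := by
  obtain ⟨p, hp⟩ := hG.exists_walk_length_eq_dist x y
  cases p with
  | nil => exact absurd rfl hne
  | @cons _ u _ hxu q =>
    refine ⟨u, hxu.ne', fun h => hadj (h ▸ hxu), ?_⟩
    have h₁ := dist_eq_one_iff_adj.2 hxu
    have := dist_le q
    have := hG.dist_triangle (u := x) (v := u) (w := y)
    rw [Walk.length_cons] at hp
    lia

theorem IsAcyclic.exists_not_adj (hG : G.IsAcyclic) {a b c : V}
    (hab : a ≠ b) (hac : a ≠ c) (hbc : b ≠ c) :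
    ∃ x y, x ∈ ({a, b, c} : Set V) ∧ y ∈ ({a, b, c} : Set V) ∧ x ≠ y ∧ ¬ G.Adj x y := by
  classical
  by_contra! h
  exact hG.cliqueFree le_rfl {a, b, c} (is3Clique_triple_iff.2
    ⟨h a b (by simp) (by simp) hab, h a c (by simp) (by simp) hac,
      h b c (by simp) (by simp) hbc⟩)

theorem Connected.dist_boxProd (hG : G.Connected) (hH : H.Connected) (x y : V × W) :
    (G □ H).dist x y = G.dist x.1 y.1 + H.dist x.2 y.2 := by
  have h := edist_boxProd (G := G) (H := H) x y
  rw [← ((hG.boxProd hH) x y).coe_dist_eq_edist, ← (hG x.1 y.1).coe_dist_eq_edist,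
    ← (hH x.2 y.2).coe_dist_eq_edist] at h
  exact_mod_cast h

/-- A vertex of a box product lies on a geodesic if and only if this holds in both coordinates. -/
theorem Connected.dist_boxProd_eq_add_iff (hG : G.Connected) (hH : H.Connected) (x y z : V × W) :
    (G □ H).dist x y = (G □ H).dist x z + (G □ H).dist z y ↔
      G.dist x.1 y.1 = G.dist x.1 z.1 + G.dist z.1 y.1 ∧
        H.dist x.2 y.2 = H.dist x.2 z.2 + H.dist z.2 y.2 := by
  simp only [hG.dist_boxProd hH]
  have := hG.dist_triangle (u := x.1) (v := z.1) (w := y.1)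
  have := hH.dist_triangle (u := x.2) (v := z.2) (w := y.2)
  lia

end SimpleGraph

/-- If `z` belongs to a general position set of a product of two trees, then in one of the two
coordinates `z` does not separate any two of the other elements. -/
theorem IsGenPosSet.forall_ne_or_forall_ne {V W : Type*} {G : SimpleGraph V}
    {H : SimpleGraph W} {S : Set (V × W)} (hG : G.IsTree) (hH : H.IsTree)
    (hS : IsGenPosSet (G □ H) S) {z : V × W} (hz : z ∈ S) :
    (∀ x ∈ S, ∀ y ∈ S, x ≠ z → y ≠ z → G.dist x.1 y.1 ≠ G.dist x.1 z.1 + G.dist z.1 y.1) ∨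
      ∀ x ∈ S, ∀ y ∈ S, x ≠ z → y ≠ z → H.dist x.2 y.2 ≠ H.dist x.2 z.2 + H.dist z.2 y.2 := by
  have key : ∀ x ∈ S, ∀ y ∈ S, x ≠ z → y ≠ z →
      G.dist x.1 y.1 = G.dist x.1 z.1 + G.dist z.1 y.1 →
        H.dist x.2 y.2 ≠ H.dist x.2 z.2 + H.dist z.2 y.2 := by
    intro x hx y hy hxz hyz h₁ h₂
    by_cases hxy : x = y
    · subst hxy
      rw [SimpleGraph.dist_self] at h₁ h₂
      exact hxz (Prod.ext (hG.1.dist_eq_zero_iff.1 (by lia)) (hH.1.dist_eq_zero_iff.1 (by lia)))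
    · exact hS x hx y hy z hz hxy hxz hyz ((hG.1.dist_boxProd_eq_add_iff hH.1 x y z).2 ⟨h₁, h₂⟩)
  by_contra! ⟨⟨a, ha, b, hb, haz, hbz, hab⟩, c, hc, d, hd, hcz, hdz, hcd⟩
  have hab' := key a ha b hb haz hbz hab
  have to_a : ∀ v ∈ S, v ≠ z → H.dist v.2 a.2 ≠ H.dist v.2 z.2 + H.dist z.2 a.2 := by
    intro v hv hvz hva
    rcases hG.dist_eq_add_or_dist_eq_add v.1 hab with h | h
    · exact key a ha v hv haz hvz h (dist_eq_add_symm hva)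
    · have hvb := key v hv b hb hvz hbz h
      rcases hH.dist_eq_add_or_dist_eq_add b.2 hva with h' | h'
      · exact hvb h'
      · exact hab' (dist_eq_add_symm h')
  rcases hH.dist_eq_add_or_dist_eq_add a.2 hcd with h | h
  · exact to_a c hc hcz h
  · exact to_a d hd hdz (dist_eq_add_symm h)

section GenPosNum

variable {V W : Type*} [Fintype V] [Fintype W] {G : SimpleGraph V} {H : SimpleGraph W}

theorem bddAbove_card_isGenPosSet (G : SimpleGraph V) :
    BddAbove {n | ∃ S : Finset V, IsGenPosSet G ↑S ∧ S.card = n} :=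
  ⟨Fintype.card V, by rintro _ ⟨S, -, rfl⟩; exact S.card_le_univ⟩

theorem IsGenPosSet.card_le_genPosNum {S : Finset V} (hS : IsGenPosSet G ↑S) :
    S.card ≤ genPosNum G :=
  le_csSup (bddAbove_card_isGenPosSet G) ⟨S, hS, rfl⟩

theorem exists_isGenPosSet_card_eq_genPosNum (G : SimpleGraph V) :
    ∃ S : Finset V, IsGenPosSet G ↑S ∧ S.card = genPosNum G :=
  Nat.sSup_mem (s := {n | ∃ S : Finset V, IsGenPosSet G ↑S ∧ S.card = n})
    ⟨0, ∅, by simp [IsGenPosSet], rfl⟩ (bddAbove_card_isGenPosSet G)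

/-- A tree with at least three vertices has a largest general position set containing two
nonadjacent vertices. -/
theorem SimpleGraph.IsTree.exists_isGenPosSet_not_adj (hG : G.IsTree)
    (hV : 3 ≤ Fintype.card V) :
    ∃ S : Finset V, IsGenPosSet G ↑S ∧ S.card = genPosNum G ∧
      ∃ x ∈ S, ∃ y ∈ S, x ≠ y ∧ ¬ G.Adj x y := by
  classical
  obtain ⟨S, hS, hcard⟩ := exists_isGenPosSet_card_eq_genPosNum G
  by_cases h3 : 2 < S.card
  · obtain ⟨a, b, c, ha, hb, hc, hab, hac, hbc⟩ := Finset.two_lt_card_iff.1 h3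
    obtain ⟨x, y, hx, hy, hne, hadj⟩ := hG.2.exists_not_adj hab hac hbc
    have hsub : ({a, b, c} : Set V) ⊆ S := by
      rintro v (rfl | rfl | rfl) <;> assumption
    exact ⟨S, hS, hcard, x, hsub hx, y, hsub hy, hne, hadj⟩
  · obtain ⟨a, b, c, hab, hac, hbc⟩ := Fintype.two_lt_card_iff.1 hV
    obtain ⟨x, y, -, -, hne, hadj⟩ := hG.2.exists_not_adj hab hac hbc
    have hpair : IsGenPosSet G ↑({x, y} : Finset V) := by
      intro p hp q hq r hr
      simp only [Finset.coe_insert, Finset.coe_singleton, Set.mem_insert_iff,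
        Set.mem_singleton_iff] at hp hq hr
      grind
    have hle := hpair.card_le_genPosNum
    have htwo := Finset.card_pair hne
    exact ⟨{x, y}, hpair, by lia, x, by simp, y, by simp, hne, hadj⟩

/-- A tree with at least three vertices has a largest general position set `S` and a vertex
`u ∉ S` such that no element of `S` separates `u` from another element of `S`. -/
theorem SimpleGraph.IsTree.exists_isGenPosSet_center (hG : G.IsTree)
    (hV : 3 ≤ Fintype.card V) :
    ∃ S : Finset V, IsGenPosSet G ↑S ∧ S.card = genPosNum G ∧ ∃ u ∉ S,
      ∀ s ∈ S, ∀ t ∈ S, s ≠ t → G.dist u t ≠ G.dist u s + G.dist s t := by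
  obtain ⟨S, hS, hcard, x, hx, y, hy, hne, hadj⟩ := hG.exists_isGenPosSet_not_adj hV
  obtain ⟨u, hux, huy, hu⟩ := hG.1.exists_dist_eq_add hne hadj
  have huS : u ∉ S := fun h => hS x hx y hy u h hne hux.symm huy.symm hu
  refine ⟨S, hS, hcard, u, huS, fun s hs t ht hst hsep => ?_⟩
  have hpos : 0 < G.dist u s := hG.1.pos_dist_of_ne fun h => huS (h ▸ hs)
  obtain ⟨v, hv, huv⟩ : ∃ v ∈ S, G.dist s v = G.dist s u + G.dist u v := by
    rcases hG.dist_eq_add_or_dist_eq_add s hu with h | h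
    · exact ⟨x, hx, dist_eq_add_symm h⟩
    · exact ⟨y, hy, h⟩
  have hus := G.dist_comm (u := u) (v := s)
  have hsv : s ≠ v := by
    rintro rfl
    rw [SimpleGraph.dist_self] at huv
    lia
  have hvt : v ≠ t := by
    rintro rfl
    lia
  rcases hG.dist_eq_add_or_dist_eq_add v hsep with h | h
  · lia
  · exact hS v hv t ht s hs hvt hsv.symm hst.symm h

theorem genPosNum_add_le_boxProd (hG : G.IsTree) (hH : H.IsTree)
    (hV : 3 ≤ Fintype.card V) (hW : 3 ≤ Fintype.card W) :
    genPosNum G + genPosNum H ≤ genPosNum (G □ H) := by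
  classical
  obtain ⟨S, hS, hScard, u, huS, hu⟩ := hG.exists_isGenPosSet_center hV
  obtain ⟨R, hR, hRcard, w, hwR, hw⟩ := hH.exists_isGenPosSet_center hW
  have hdisj : Disjoint (S ×ˢ {w}) ({u} ×ˢ R) := by
    rw [Finset.disjoint_left]
    rintro ⟨a, b⟩ h₁ h₂
    simp only [Finset.mem_product, Finset.mem_singleton] at h₁ h₂
    exact huS (h₂.1 ▸ h₁.1)
  have hgp : IsGenPosSet (G □ H) ↑(S ×ˢ {w} ∪ {u} ×ˢ R) := by
    have hG0 {a b : V} : G.dist a b = 0 → a = b := hG.1.dist_eq_zero_iff.1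
    have hH0 {a b : W} : H.dist a b = 0 → a = b := hH.1.dist_eq_zero_iff.1
    rintro ⟨x₁, x₂⟩ hx ⟨y₁, y₂⟩ hy ⟨z₁, z₂⟩ hz hxy hxz hyz h
    rw [hG.1.dist_boxProd_eq_add_iff hH.1] at h
    obtain ⟨h₁, h₂⟩ := h
    simp only [Finset.coe_union, Set.mem_union, Finset.mem_coe, Finset.mem_product,
      Finset.mem_singleton] at hx hy hz
    simp only [ne_eq, Prod.mk.injEq, not_and] at hxy hxz hyz h₁ h₂
    rcases hx with ⟨hx, rfl⟩ | ⟨rfl, hx⟩ <;> rcases hy with ⟨hy, rfl⟩ | ⟨rfl, hy⟩ <;>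
      rcases hz with ⟨hz, rfl⟩ | ⟨rfl, hz⟩
    · exact hS _ hx _ hy _ hz (hxy · rfl) (hxz · rfl) (hyz · rfl) h₁
    · rw [SimpleGraph.dist_self] at h₂
      exact hwR (hH0 (by lia : H.dist z₂ y₂ = 0) ▸ hz)
    · exact hu _ hz _ hx (hxz ·.symm rfl) (dist_eq_add_symm h₁)
    · exact hw _ hz _ hy (hyz rfl ·.symm) h₂
    · exact hu _ hz _ hy (hyz ·.symm rfl) h₁
    · exact hw _ hz _ hx (hxz rfl ·.symm) (dist_eq_add_symm h₂)
    · rw [SimpleGraph.dist_self] at h₁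
      exact huS (hG0 (by lia : G.dist z₁ y₁ = 0) ▸ hz)
    · exact hR _ hx _ hy _ hz (hxy rfl) (hxz rfl) (hyz rfl) h₂
  calc genPosNum G + genPosNum H = (S ×ˢ {w} ∪ {u} ×ˢ R).card := by
        rw [Finset.card_union_of_disjoint hdisj]
        simp [hScard, hRcard]
    _ ≤ genPosNum (G □ H) := hgp.card_le_genPosNum

/-- If `f` sends no element `z` of `A` into the geodesic interval between the images of two
(possibly equal) elements of `A` other than `z`, then `f` embeds `A` as a general position set. -/
theorem card_le_genPosNum_of_forall_ne {ι : Type*} (f : ι → V) {A : Finset ι}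
    (hA : ∀ z ∈ A, ∀ x ∈ A, ∀ y ∈ A, x ≠ z → y ≠ z →
      G.dist (f x) (f y) ≠ G.dist (f x) (f z) + G.dist (f z) (f y)) :
    A.card ≤ genPosNum G := by
  classical
  have hinj : Set.InjOn f A := by
    intro x hx z hz hxz
    by_contra hne
    exact hA z hz x hx x hx hne hne (by simp [hxz])
  rw [← Finset.card_image_of_injOn hinj]
  apply IsGenPosSet.card_le_genPosNum
  rw [Finset.coe_image]
  rintro _ ⟨x, hx, rfl⟩ _ ⟨y, hy, rfl⟩ _ ⟨z, hz, rfl⟩ - hxz hyz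
  exact hA z hz x hx y hy (fun h => hxz (h ▸ rfl)) (fun h => hyz (h ▸ rfl))

theorem genPosNum_boxProd_le_add (hG : G.IsTree) (hH : H.IsTree) :
    genPosNum (G □ H) ≤ genPosNum G + genPosNum H := by
  classical
  obtain ⟨S, hS, hcard⟩ := exists_isGenPosSet_card_eq_genPosNum (G □ H)
  rw [← hcard, ← S.card_filter_add_card_filter_not (fun z => ∀ x ∈ S, ∀ y ∈ S, x ≠ z → y ≠ z →
    G.dist x.1 y.1 ≠ G.dist x.1 z.1 + G.dist z.1 y.1)]
  refine Nat.add_le_add (card_le_genPosNum_of_forall_ne Prod.fst ?_)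
    (card_le_genPosNum_of_forall_ne Prod.snd ?_) <;> intro z hz x hx y hy <;>
    rw [Finset.mem_filter] at hx hy hz
  · exact hz.2 x hx.1 y hy.1
  · exact (hS.forall_ne_or_forall_ne hG hH hz.1).resolve_left hz.2 x hx.1 y hy.1

end GenPosNum

/-- If `T` and `T*` are finite trees, each with at least 3 vertices, then
`gp(T □ T*) = gp(T) + gp(T*)`. -/
theorem gp_boxProd_trees {V W : Type*} [Fintype V] [Fintype W]
    (T : SimpleGraph V) (T' : SimpleGraph W)
    (hT : T.IsTree) (hT' : T'.IsTree)
    (hV : 3 ≤ Fintype.card V) (hW : 3 ≤ Fintype.card W) :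
    genPosNum (T □ T') = genPosNum T + genPosNum T' :=
  (genPosNum_boxProd_le_add hT hT').antisymm (genPosNum_add_le_boxProd hT hT' hV hW)
end

section
/- If T is a finite tree with at least 2 vertices, then gp(T) = ℓ(T), the number of leaves of T. -/
open SimpleGraph

namespace SimpleGraph

variable {V : Type*} {G : SimpleGraph V}

/-- A vertex on a geodesic splits the distance between its endpoints. -/
lemma Walk.dist_eq_add_of_mem_support {u v w : V} (p : G.Walk u v)
    (hp : p.length = G.dist u v) (hw : w ∈ p.support) :
    G.dist u v = G.dist u w + G.dist w v := by
  classical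
  have hlen := congrArg Walk.length (p.take_spec hw)
  rw [Walk.length_append] at hlen
  have h₁ := dist_le (p.takeUntil w hw)
  have h₂ := dist_le (p.dropUntil w hw)
  have h₃ := Reachable.dist_triangle_left ⟨p.takeUntil w hw⟩ v
  omega

/-- Two vertices on the geodesic from `r` to `l` in a tree are comparable when seen from `r`. -/
lemma IsTree.dist_eq_add_or_of_dist_eq_add (hG : G.IsTree) {r l s t : V}
    (hs : G.dist r l = G.dist r s + G.dist s l) (ht : G.dist r l = G.dist r t + G.dist t l) :
    G.dist r t = G.dist r s + G.dist s t ∨ G.dist r s = G.dist r t + G.dist t s := by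
  obtain ⟨p₁, hp₁⟩ := hG.connected.exists_walk_length_eq_dist r s
  obtain ⟨p₂, hp₂⟩ := hG.connected.exists_walk_length_eq_dist s l
  obtain ⟨q₁, hq₁⟩ := hG.connected.exists_walk_length_eq_dist r t
  obtain ⟨q₂, hq₂⟩ := hG.connected.exists_walk_length_eq_dist t l
  have hp : (p₁.append p₂).IsPath :=
    Walk.isPath_of_length_eq_dist _ (by rw [Walk.length_append]; omega)
  have hq : (q₁.append q₂).IsPath :=
    Walk.isPath_of_length_eq_dist _ (by rw [Walk.length_append]; omega)
  have hpq : p₁.append p₂ = q₁.append q₂ := (hG.existsUnique_path r l).unique hp hq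
  have hmem : s ∈ (q₁.append q₂).support := by
    rw [← hpq, Walk.mem_support_append_iff]
    exact Or.inl p₁.end_mem_support
  rcases (Walk.mem_support_append_iff _ _).1 hmem with h | h
  · exact Or.inl (q₁.dist_eq_add_of_mem_support hq₁ h)
  · have := q₂.dist_eq_add_of_mem_support hq₂ h
    omega

/-- In a connected graph, a vertex distinct from `x` has a neighbour closer to `x`. -/
lemma Connected.exists_adj_dist_eq_add_one (hG : G.Connected) {z x : V} (h : z ≠ x) :
    ∃ w, G.Adj z w ∧ G.dist z x = G.dist w x + 1 := by
  obtain ⟨p, hp⟩ := hG.exists_walk_length_eq_dist z x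
  cases p with
  | nil => exact absurd rfl h
  | @cons _ w _ hzw q =>
    refine ⟨w, hzw, ?_⟩
    have h₁ := dist_le q
    have h₂ := hG.dist_triangle (u := z) (v := w) (w := x)
    rw [dist_eq_one_iff_adj.2 hzw] at h₂
    rw [Walk.length_cons] at hp
    omega

/-- In a finite tree every geodesic from `r` to some `s ≠ r` extends to one ending in a leaf. -/
lemma IsTree.exists_isLeaf_dist_eq_add [Finite V] (hG : G.IsTree) {r s : V} (h : s ≠ r) :
    ∃ l, IsLeaf G l ∧ G.dist r l = G.dist r s + G.dist s l := by
  obtain ⟨l, hl, hmax⟩ := (Set.toFinite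
    {v | G.dist r v = G.dist r s + G.dist s v}).exists_maximalFor (G.dist r) _ ⟨s, by simp⟩
  simp only [Set.mem_ofPred_eq] at hl hmax
  have hlr : l ≠ r := by
    rintro rfl
    have := hG.connected.pos_dist_of_ne h
    rw [dist_self, dist_comm] at hl
    omega
  have hcloser : ∀ w, G.Adj l w → G.dist r l = G.dist r w + 1 := by
    intro w hw
    rcases hG.dist_eq_dist_add_one_of_adj r hw with h₁ | h₁
    · exact h₁
    · have h₂ := hG.connected.dist_triangle (u := s) (v := l) (w := w)
      have h₃ := hG.connected.dist_triangle (u := r) (v := s) (w := w)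
      rw [dist_eq_one_iff_adj.2 hw] at h₂
      have := hmax (j := w) (by omega) (by omega)
      omega
  obtain ⟨w, hw, -⟩ := hG.connected.exists_adj_dist_eq_add_one hlr
  refine ⟨l, ⟨w, hw, fun y hy ↦ ?_⟩, hl⟩
  have hw₁ := hcloser w hw
  have hy₁ := hcloser y hy
  have hw₂ := dist_eq_one_iff_adj.2 hw.symm
  have hy₂ := dist_eq_one_iff_adj.2 hy.symm
  have hyw := hG.dist_eq_add_or_of_dist_eq_add (r := r) (l := l) (s := y) (t := w)
    (by omega) (by omega)
  rw [dist_comm (u := w) (v := y)] at hyw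
  exact hG.connected.dist_eq_zero_iff.1 (by omega)

end SimpleGraph

/-- The leaves of a connected graph form a general position set. -/
lemma isGenPosSet_setOf_isLeaf {V : Type*} {G : SimpleGraph V} (hG : G.Connected) :
    IsGenPosSet G {v | IsLeaf G v} := by
  intro x _ y _ z hz _ hxz hyz heq
  obtain ⟨w, hw, hwx⟩ := hG.exists_adj_dist_eq_add_one hxz.symm
  obtain ⟨w', hw', hwy⟩ := hG.exists_adj_dist_eq_add_one hyz.symm
  obtain rfl := hz.unique hw hw'
  have := hG.dist_triangle (u := x) (v := w) (w := y)
  rw [dist_comm (u := x) (v := z), hwx, hwy, dist_comm (u := w) (v := x)] at heq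
  omega

/-- In a finite nontrivial tree a general position set has at most as many elements as there
are leaves. -/
lemma IsGenPosSet.ncard_le_ncard_isLeaf {V : Type*} [Finite V] [Nontrivial V]
    {G : SimpleGraph V} (hG : G.IsTree) {S : Set V} (hS : IsGenPosSet G S) :
    S.ncard ≤ {v | IsLeaf G v}.ncard := by
  rcases S.subsingleton_or_nontrivial with hsub | ⟨r, hr, a, ha, hra⟩
  · obtain ⟨r, s, hrs⟩ := exists_pair_ne V
    obtain ⟨l, hl, -⟩ := hG.exists_isLeaf_dist_eq_add hrs
    exact (Set.ncard_le_one_iff_subsingleton.2 hsub).trans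
      ((Set.ncard_pos (Set.toFinite _)).2 ⟨l, hl⟩)
  -- Send `s ≠ r` to a leaf beyond `s` seen from `r`, and `r` to a leaf beyond `r` seen from `a`.
  obtain ⟨m, hm, hma⟩ := hG.exists_isLeaf_dist_eq_add hra
  have hbeyond : ∀ s, ∃ l, IsLeaf G l ∧ (s ≠ r → G.dist r l = G.dist r s + G.dist s l) ∧
      (s = r → l = m) := by
    intro s
    by_cases hs : s = r
    · exact ⟨m, hm, fun h ↦ absurd hs h, fun _ ↦ rfl⟩
    · obtain ⟨l, hl, hd⟩ := hG.exists_isLeaf_dist_eq_add hs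
      exact ⟨l, hl, fun _ ↦ hd, fun h ↦ absurd h hs⟩
  choose f hleaf hdist hroot using hbeyond
  have hm_ne : ∀ s ∈ S, s ≠ r → f s ≠ m := by
    intro s hs hsr hfs
    have h₁ := hdist s hsr
    rw [hfs] at h₁
    have hcomm := G.dist_comm (u := a) (v := r)
    by_cases hsa : s = a
    · subst hsa
      have := hG.connected.pos_dist_of_ne hsr
      omega
    · have h₂ := hG.connected.dist_triangle (u := a) (v := s) (w := m)
      have h₃ := hG.connected.dist_triangle (u := a) (v := r) (w := s)
      exact hS a ha s hs r hr (Ne.symm hsa) hra.symm hsr (by omega)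
  refine Set.ncard_le_ncard_of_injOn f (fun s _ ↦ hleaf s) ?_ (Set.toFinite _)
  intro s hs t ht hst
  by_cases hsr : s = r <;> by_cases htr : t = r
  · rw [hsr, htr]
  · exact absurd (hst.symm.trans (hroot s hsr)) (hm_ne t ht htr)
  · exact absurd (hst.trans (hroot t htr)) (hm_ne s hs hsr)
  · by_contra hne
    have h₁ := hdist s hsr
    rw [hst] at h₁
    rcases hG.dist_eq_add_or_of_dist_eq_add h₁ (hdist t htr) with h | h
    · exact hS r hr t ht s hs (Ne.symm htr) (Ne.symm hsr) (Ne.symm hne) h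
    · exact hS r hr s hs t ht (Ne.symm hsr) (Ne.symm htr) hne h

/-- If `T` is a finite tree with at least 2 vertices, then `gp(T)` equals the
number of leaves of `T`. -/
theorem gp_tree_eq_card_leaves {V : Type*} [Fintype V]
    (T : SimpleGraph V) (hT : T.IsTree) (hV : 2 ≤ Fintype.card V) :
    genPosNum T = {v : V | IsLeaf T v}.ncard := by
  classical
  have : Nontrivial V := Fintype.one_lt_card_iff_nontrivial.1 hV
  refine IsGreatest.csSup_eq ⟨⟨{v : V | IsLeaf T v}.toFinset, ?_, ?_⟩, ?_⟩
  · rw [Set.coe_toFinset]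
    exact isGenPosSet_setOf_isLeaf hT.connected
  · rw [Set.ncard_eq_toFinset_card']
  · rintro _ ⟨S, hS, rfl⟩
    rw [← Set.ncard_coe_finset]
    exact hS.ncard_le_ncard_isLeaf hT
end

section
/- If G and H are connected graphs and (g₁,h₁), (g₂,h₂) are vertices of the Cartesian product G □ H, then the interval between them satisfies I_{G □ H}((g₁,h₁),(g₂,h₂)) = I_G(g₁,g₂) × I_H(h₁,h₂). -/
open SimpleGraph

/-- The interval between `u` and `v` in `G`: all vertices lying on a shortest
`u,v`-path. -/
def interval {V : Type*} (G : SimpleGraph V) (u v : V) : Set V :=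
  {w | G.dist u v = G.dist u w + G.dist w v}

/-- The distance in the Cartesian product of connected graphs is the sum of the distances in the
factors. -/
theorem SimpleGraph.Connected.dist_boxProd_s4 {V W : Type*} {G : SimpleGraph V} {H : SimpleGraph W}
    (hG : G.Connected) (hH : H.Connected) (x y : V × W) :
    (G □ H).dist x y = G.dist x.1 y.1 + H.dist x.2 y.2 := by
  rw [SimpleGraph.dist, SimpleGraph.edist_boxProd, ENat.toNat_add
    (edist_ne_top_iff_reachable.mpr (hG _ _)) (edist_ne_top_iff_reachable.mpr (hH _ _))]
  rfl

/-- Intervals in the Cartesian product of two connected graphs are products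
of intervals in the factors. -/
theorem interval_boxProd {V W : Type*}
    (G : SimpleGraph V) (H : SimpleGraph W)
    (hG : G.Connected) (hH : H.Connected)
    (g₁ g₂ : V) (h₁ h₂ : W) :
    interval (G □ H) (g₁, h₁) (g₂, h₂) =
      (interval G g₁ g₂) ×ˢ (interval H h₁ h₂) := by
  ext ⟨g, h⟩
  have hg := hG.dist_triangle (u := g₁) (v := g) (w := g₂)
  have hh := hH.dist_triangle (u := h₁) (v := h) (w := h₂)
  simp only [interval, Set.mem_prod, Set.mem_ofPred_eq, hG.dist_boxProd_s4 hH]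
  lia
end
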